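/- arXiv:math/0306404 — 2 statements merged into one kernel-verified Lean document; each statement's English description precedes it below -/
import Mathlib

section
/- Let E ⊊ (−π, π] be a finite union of semi-open intervals, m(x) = 1 for x ∈ E and m(x) = −1 for x ∈ E^c := (−π,π] \ E, and let M be multiplication by m on L²(−π, π). Let L_n := span{e^{ikx} : −n ≤ k ≤ n}. Then the uniform limiting set of the second order spectra equals the whole unit circle: Λ(M) = {z ∈ ℂ : |z| = 1}. -/
open Filter Topology MeasureTheory

attribute [local instance] Classical.propDecidable

noncomputable section

section Defs

variable {H : Type*} [NormedAddCommGroup H] [InnerProductSpace ℂ H] [CompleteSpace H]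

/-- The compression `P T |_(ran P)` of a linear operator `T` to the range of `P`. -/
def compress (P : H →L[ℂ] H) (T : H →ₗ[ℂ] H) :
    LinearMap.range (P : H →ₗ[ℂ] H) →ₗ[ℂ] LinearMap.range (P : H →ₗ[ℂ] H) :=
  LinearMap.codRestrict (LinearMap.range (P : H →ₗ[ℂ] H))
    (((P : H →ₗ[ℂ] H).comp T).comp (LinearMap.range (P : H →ₗ[ℂ] H)).subtype)
    fun c => ⟨T c, rfl⟩

/-- `(M - z)²` as a linear map. -/
def sqz (M : H →ₗ[ℂ] H) (z : ℂ) : H →ₗ[ℂ] H :=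
  (M - z • LinearMap.id) ∘ₗ (M - z • LinearMap.id)

/-- The second order spectrum of `M` relative to the range of `P`. -/
def spec2 (M : H →ₗ[ℂ] H) (P : H →L[ℂ] H) : Set ℂ :=
  {z | ¬ Function.Bijective (compress P (sqz M z))}

end Defs

/-- Lebesgue measure on `(-π, π]`. -/
def mπ : Measure ℝ := volume.restrict (Set.Ioc (-Real.pi) Real.pi)

/-- The space `L²(-π, π)`. -/
abbrev Hsp : Type := Lp ℂ 2 mπ

section Abstract

variable {H : Type*} [NormedAddCommGroup H] [InnerProductSpace ℂ H] [CompleteSpace H]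

lemma sqz_apply_invol (M : H →ₗ[ℂ] H) (hMM : ∀ x, M (M x) = x) (z : ℂ) (v : H) :
    sqz M z v = (1 + z ^ 2) • v - (2 * z) • M v := by
  simp only [sqz, LinearMap.comp_apply, LinearMap.sub_apply, LinearMap.smul_apply,
    LinearMap.id_apply, map_sub, map_smul, hMM]
  module

lemma proj_fix (P : H →L[ℂ] H) (hPi : IsIdempotentElem P) {v : H}
    (hv : v ∈ LinearMap.range (P : H →ₗ[ℂ] H)) : P v = v := by
  obtain ⟨w, rfl⟩ := hv
  exact DFunLike.congr_fun hPi w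

lemma norm_invol (M : H →ₗ[ℂ] H) (hMM : ∀ x, M (M x) = x)
    (hMs : ∀ x y, inner ℂ (M x) y = inner ℂ x (M y)) (v : H) : ‖M v‖ = ‖v‖ := by
  have h := hMs v (M v)
  rw [hMM, inner_self_eq_norm_sq_to_K, inner_self_eq_norm_sq_to_K] at h
  have h' : ‖M v‖ ^ 2 = ‖v‖ ^ 2 := by exact_mod_cast h
  exact (sq_eq_sq₀ (norm_nonneg _) (norm_nonneg _)).1 h'

lemma spec2_norm_eq_one (M : H →ₗ[ℂ] H) (hMM : ∀ x, M (M x) = x)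
    (hMs : ∀ x y, inner ℂ (M x) y = inner ℂ x (M y)) (P : H →L[ℂ] H)
    (hPs : ∀ x y, inner ℂ (P x) y = inner ℂ x (P y)) (hPi : IsIdempotentElem P)
    [FiniteDimensional ℂ (LinearMap.range (P : H →ₗ[ℂ] H))] {z : ℂ} (hz : z ∈ spec2 M P) :
    ‖z‖ = 1 := by
  have hni : ¬ Function.Injective (compress P (sqz M z)) := by
    intro h
    exact hz ⟨h, LinearMap.injective_iff_surjective.1 h⟩
  rw [injective_iff_map_eq_zero] at hni
  push Not at hni
  obtain ⟨⟨v, hv⟩, h0, hv0⟩ := hni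
  have hv0' : v ≠ 0 := fun h => hv0 (Subtype.ext h)
  have h1 : P (sqz M z v) = 0 := congrArg Subtype.val h0
  have h2 : inner ℂ v (sqz M z v) = 0 := by
    rw [← proj_fix P hPi hv, hPs, proj_fix P hPi hv, h1, inner_zero_right]
  rw [sqz_apply_invol M hMM, inner_sub_right, inner_smul_right, inner_smul_right,
    inner_self_eq_norm_sq_to_K] at h2
  have him : (inner ℂ v (M v)).im = 0 := by
    have := hMs v v
    rw [← inner_conj_symm] at this
    exact Complex.conj_eq_iff_im.1 this
  have hle : |(inner ℂ v (M v)).re| ≤ ‖v‖ ^ 2 := by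
    calc _ ≤ ‖inner ℂ v (M v)‖ := Complex.abs_re_le_norm _
      _ ≤ ‖v‖ * ‖M v‖ := norm_inner_le_norm _ _
      _ = _ := by rw [norm_invol M hMM hMs]; ring
  have hpos : 0 < ‖v‖ ^ 2 := by positivity
  obtain ⟨N, hN⟩ : ∃ N, N = ‖v‖ ^ 2 := ⟨_, rfl⟩
  obtain ⟨s, hs⟩ : ∃ s, s = (inner ℂ v (M v)).re := ⟨_, rfl⟩
  have hin : inner ℂ v (M v) = (s : ℂ) := by
    apply Complex.ext <;> simp [hs, him]
  rw [← hN] at hpos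
  rw [hin] at h2
  rw [← hs, ← hN] at hle
  obtain ⟨t, ht⟩ : ∃ t, t = s / N := ⟨_, rfl⟩
  have hst : s = t * N := by rw [ht]; field_simp
  have htl : t ^ 2 ≤ 1 := by
    rw [sq_le_one_iff_abs_le_one, ht, abs_div, abs_of_pos hpos, div_le_one hpos]; exact hle
  have h3 : (1 + z ^ 2) - 2 * z * t = 0 := by
    have hN0 : (N : ℂ) ≠ 0 := by exact_mod_cast hpos.ne'
    apply mul_right_cancel₀ hN0
    rw [hst] at h2
    have h4 : ((‖v‖ : ℂ)) ^ 2 = N := by rw [hN]; push_cast; rfl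
    erw [h4] at h2
    push_cast at h2
    linear_combination h2
  have hre := congrArg Complex.re h3
  have him' := congrArg Complex.im h3
  simp [pow_two] at hre him'
  have hn : z.re ^ 2 + z.im ^ 2 = 1 := by
    have hf : z.im * (z.re - t) = 0 := by linear_combination him' / 2
    rcases mul_eq_zero.1 hf with h | h
    · rw [h] at hre ⊢
      have h5 : (z.re - t) ^ 2 ≤ 0 := by nlinarith
      have h6 : z.re - t = 0 := by
        have := le_antisymm h5 (sq_nonneg _)
        exact pow_eq_zero_iff (two_ne_zero) |>.1 this
      have h7 : z.re = t := by linarith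
      rw [h7] at hre ⊢
      nlinarith
    · have h7 : t = z.re := by linarith
      rw [h7] at hre
      nlinarith
  rw [Complex.norm_def, Complex.normSq_apply, ← pow_two, ← pow_two, hn, Real.sqrt_one]

lemma mem_spec2_of_eig (M : H →ₗ[ℂ] H) (hMM : ∀ x, M (M x) = x) (P : H →L[ℂ] H)
    (hPi : IsIdempotentElem P) {z : ℂ} (hz : ‖z‖ = 1) {v : H}
    (hv : v ∈ LinearMap.range (P : H →ₗ[ℂ] H)) (hv0 : v ≠ 0)
    (he : P (M v) = (z.re : ℂ) • v) : z ∈ spec2 M P := by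
  intro hb
  have h : compress P (sqz M z) ⟨v, hv⟩ = 0 := by
    apply Subtype.ext
    change P (sqz M z v) = 0
    rw [sqz_apply_invol M hMM, map_sub, map_smul, map_smul, he, proj_fix P hPi hv, smul_smul,
      ← sub_smul]
    have : (1 + z ^ 2 - 2 * z * z.re : ℂ) = 0 := by
      have h1 : z * (starRingEnd ℂ) z = 1 := by
        rw [Complex.mul_conj, Complex.normSq_eq_norm_sq, hz]; simp
      have h2 : (2 * z.re : ℂ) = z + (starRingEnd ℂ) z := by
        rw [Complex.add_conj]; push_cast; ring
      linear_combination (-z) * h2 - h1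
    rw [this, zero_smul]
  exact hv0 (congrArg Subtype.val ((injective_iff_map_eq_zero _).1 hb.1 _ h))

lemma bounded_below_of_eig (M : H →ₗ[ℂ] H)
    (hMs : ∀ x y, inner ℂ (M x) y = inner ℂ x (M y)) (P : H →L[ℂ] H)
    (hPs : ∀ x y, inner ℂ (P x) y = inner ℂ x (P y)) (hPi : IsIdempotentElem P)
    [FiniteDimensional ℂ (LinearMap.range (P : H →ₗ[ℂ] H))] (l ε : ℝ) (hε : 0 ≤ ε)
    (hno : ∀ (μ : ℝ) (v : H), v ∈ LinearMap.range (P : H →ₗ[ℂ] H) → v ≠ 0 →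
      P (M v) = (μ : ℂ) • v → ε ≤ |μ - l|)
    (g : H) (hg : g ∈ LinearMap.range (P : H →ₗ[ℂ] H)) :
    ε * ‖g‖ ≤ ‖P (M g) - (l : ℂ) • g‖ := by
  have hT : (compress P M).IsSymmetric := by
    rintro ⟨x, hx⟩ ⟨y, hy⟩
    change inner ℂ (P (M x)) y = inner ℂ x (P (M y))
    rw [hPs, proj_fix P hPi hy, ← hPs, proj_fix P hPi hx, hMs]
  let b := hT.eigenvectorBasis rfl
  let G : LinearMap.range (P : H →ₗ[ℂ] H) := ⟨g, hg⟩
  have key : (ε * ‖G‖) ^ 2 ≤ ‖compress P M G - (l : ℂ) • G‖ ^ 2 := by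
    rw [mul_pow, ← b.sum_sq_norm_inner_right G, ← b.sum_sq_norm_inner_right, Finset.mul_sum]
    apply Finset.sum_le_sum
    intro i _
    have h1 : inner ℂ (b i) (compress P M G - (l : ℂ) • G)
        = ((hT.eigenvalues rfl i - l : ℝ) : ℂ) * inner ℂ (b i) G := by
      have := hT.eigenvectorBasis_apply_self_apply rfl G i
      rw [OrthonormalBasis.repr_apply_apply, OrthonormalBasis.repr_apply_apply] at this
      rw [inner_sub_right, inner_smul_right]
      erw [this]
      push_cast
      rw [sub_mul]; rfl
    rw [h1, norm_mul, mul_pow]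
    gcongr
    rw [Complex.norm_real, Real.norm_eq_abs]
    have h2 := hT.apply_eigenvectorBasis rfl i
    refine hno _ (b i : H) (b i).2 ?_ (congrArg Subtype.val h2)
    intro h
    have := b.orthonormal.1 i
    rw [show b i = 0 from Subtype.ext h] at this
    simp at this
  exact le_of_sq_le_sq key (norm_nonneg _)

lemma exists_solution (A : Submodule ℂ H) [CompleteSpace A] (B : H →L[ℂ] H)
    (hB : ∀ x y, inner ℂ (B x) y = inner ℂ x (B y)) (ε : ℝ) (hε : 0 < ε)
    (hb : ∀ g ∈ A, ε * ‖g‖ ≤ ‖A.orthogonalProjectionOnto (B g)‖) (y : A) :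
    ∃ f ∈ A, ∀ a ∈ A, inner ℂ a (B f) = inner ℂ a (y : H) := by
  let T : A →L[ℂ] A := A.orthogonalProjectionOnto ∘L B ∘L A.subtypeL
  have hTin : ∀ a x : A, inner ℂ a (T x) = inner ℂ (a : H) (B x) := fun a x =>
    Submodule.inner_orthogonalProjectionOnto_eq_of_mem_left a (B x)
  have hTb : ∀ x : A, ε * ‖x‖ ≤ ‖T x‖ := fun x => hb x x.2
  have hTs : IsSelfAdjoint T := by
    rw [ContinuousLinearMap.isSelfAdjoint_iff_isSymmetric]
    intro x y
    change inner ℂ (T x) y = inner ℂ x (T y)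
    rw [hTin, ← inner_conj_symm, hTin, inner_conj_symm, hB]
  have hcl : IsClosed (Set.range T) := by
    refine (T.antilipschitz_of_bound (K := ⟨ε⁻¹, by positivity⟩) ?_).isClosed_range
      T.uniformContinuous
    intro x
    change ‖x‖ ≤ ε⁻¹ * ‖T x‖
    rw [inv_mul_eq_div, le_div_iff₀ hε, mul_comm]; exact hTb x
  have htop : (LinearMap.range (T : A →ₗ[ℂ] A)) = ⊤ := by
    have h1 : (LinearMap.range (T : A →ₗ[ℂ] A)).topologicalClosure = ⊤ := by
      rw [Submodule.topologicalClosure_eq_top_iff, ContinuousLinearMap.orthogonal_range,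
        hTs.adjoint_eq, LinearMap.ker_eq_bot']
      intro x hx
      have := hTb x
      rw [show T x = 0 from hx, norm_zero] at this
      have : ‖x‖ ≤ 0 := by
        by_contra h
        push Not at h
        have := mul_pos hε h
        linarith
      exact norm_le_zero_iff.1 this
    rw [← h1]
    exact (IsClosed.submodule_topologicalClosure_eq (by rw [LinearMap.coe_range]; exact hcl)).symm
  obtain ⟨f, hf⟩ : y ∈ LinearMap.range (T : A →ₗ[ℂ] A) := htop ▸ Submodule.mem_top
  refine ⟨f, f.2, fun a ha => ?_⟩
  rw [← hTin ⟨a, ha⟩ f, show T f = y from hf]; rfl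

end Abstract

lemma fourier_uniqueness (h : ℝ → ℂ) (hi : Integrable h mπ)
    (h0 : ∀ k : ℤ, ∫ x, Complex.exp (Complex.I * k * x) * h x ∂mπ = 0) :
    h =ᵐ[mπ] 0 := by
  have : Fact (0 < 2 * Real.pi) := ⟨by positivity⟩
  have hmul : ∀ G : C(AddCircle (2 * Real.pi), ℂ),
      Integrable (fun x : ℝ => G (x : AddCircle (2 * Real.pi)) * h x) mπ := by
    intro G
    refine hi.bdd_mul (c := ‖G‖) ?_ ?_
    · exact (G.continuous.comp (AddCircle.continuous_mk' _)).aestronglyMeasurable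
    · exact Eventually.of_forall fun x => G.norm_coe_le_norm _
  let φ₀ : C(AddCircle (2 * Real.pi), ℂ) →ₗ[ℂ] ℂ :=
    { toFun := fun G => ∫ x, G (x : AddCircle (2 * Real.pi)) * h x ∂mπ
      map_add' := by
        intro F G
        rw [← integral_add (hmul F) (hmul G)]
        simp [add_mul]
      map_smul' := by
        intro c G
        simp only [ContinuousMap.smul_apply, smul_eq_mul, RingHom.id_apply, mul_assoc]
        rw [integral_const_mul] }
  let φ : C(AddCircle (2 * Real.pi), ℂ) →L[ℂ] ℂ := φ₀.mkContinuous (∫ x, ‖h x‖ ∂mπ) (by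
    intro G
    change ‖∫ x, G (x : AddCircle (2 * Real.pi)) * h x ∂mπ‖ ≤ _
    rw [← integral_mul_const]
    refine norm_integral_le_of_norm_le (hi.norm.mul_const _) (Eventually.of_forall fun x => ?_)
    rw [norm_mul, mul_comm]
    gcongr
    exact G.norm_coe_le_norm _)
  have hφ : ∀ G, φ G = 0 := by
    intro G
    have hG : G ∈ (Submodule.span ℂ (Set.range (@fourier (2 * Real.pi)))).topologicalClosure := by
      rw [span_fourier_closure_eq_top]; trivial
    have hle : (Submodule.span ℂ (Set.range (@fourier (2 * Real.pi)))).topologicalClosure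
        ≤ LinearMap.ker (φ : C(AddCircle (2 * Real.pi), ℂ) →ₗ[ℂ] ℂ) := by
      apply Submodule.topologicalClosure_minimal
      · rw [Submodule.span_le]
        rintro _ ⟨k, rfl⟩
        change ∫ x : ℝ, fourier k (x : AddCircle (2 * Real.pi)) * h x ∂mπ = 0
        rw [← h0 k]
        congr 1
        ext x
        rw [fourier_coe_apply]
        congr 2
        have : (Real.pi : ℂ) ≠ 0 := by exact_mod_cast Real.pi_ne_zero
        push_cast
        field_simp
      · exact φ.isClosed_ker
    exact hle hG
  have hres : mπ = volume.restrict (Set.Ioo (-Real.pi) Real.pi) := by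
    rw [mπ]; exact (Measure.restrict_congr_set Ioo_ae_eq_Ioc).symm
  have hae := isOpen_Ioo.ae_eq_zero_of_integral_contDiff_smul_eq_zero (f := h) (μ := volume)
    (U := Set.Ioo (-Real.pi) Real.pi)
    (by
      have : IntegrableOn h (Set.Ioo (-Real.pi) Real.pi) volume := by
        rw [IntegrableOn, ← hres]; exact hi
      exact this.locallyIntegrableOn) (by
    intro g hg _ hsupp
    have hgz : ∀ x, x ∉ Set.Ioo (-Real.pi) Real.pi → g x = 0 := fun x hx =>
      image_eq_zero_of_notMem_tsupport fun h => hx (hsupp h)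
    let F : C(AddCircle (2 * Real.pi), ℂ) :=
      ⟨AddCircle.liftIoc (2 * Real.pi) (-Real.pi) (fun x => (g x : ℂ)),
        AddCircle.liftIoc_continuous (by
          rw [hgz _ (by simp), hgz _ (by intro h; have := h.2; linarith)])
          (by have := hg.continuous; fun_prop)⟩
    have := hφ F
    change ∫ x : ℝ, AddCircle.liftIoc (2 * Real.pi) (-Real.pi) (fun x => (g x : ℂ)) x * h x ∂mπ = 0
      at this
    rw [← this, ← setIntegral_eq_integral_of_forall_compl_eq_zero
      (s := Set.Ioc (-Real.pi) Real.pi), mπ]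
    · apply setIntegral_congr_fun measurableSet_Ioc
      intro x hx
      dsimp only
      rw [AddCircle.liftIoc_coe_apply]
      · simp
      · convert hx using 2; ring
    · intro x hx
      rw [hgz x fun h => hx ⟨h.1, h.2.le⟩, zero_smul])
  rw [hres]
  exact (ae_restrict_iff' measurableSet_Ioo).2 hae

lemma integral_exp_ne (k : ℤ) (hk : k ≠ 0) : ∫ x, Complex.exp (Complex.I * k * x) ∂mπ = 0 := by
  rw [mπ, ← intervalIntegral.integral_of_le (by linarith [Real.pi_pos])]
  rw [integral_exp_mul_complex (by simp [hk])]
  have : Complex.exp (Complex.I * k * (Real.pi : ℝ))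
      = Complex.exp (Complex.I * k * ((-Real.pi : ℝ) : ℂ)) := by
    rw [Complex.exp_eq_exp_iff_exists_int]
    exact ⟨k, by push_cast; ring⟩
  rw [this, sub_self, zero_div]

instance : IsFiniteMeasure mπ := by unfold mπ; infer_instance

lemma mpi_univ : mπ.real Set.univ = 2 * Real.pi := by
  simp [mπ, Measure.real]
  rw [ENNReal.toReal_ofReal (by positivity)]; ring

lemma fourier_const (h : ℝ → ℂ) (hi : Integrable h mπ)
    (h0 : ∀ k : ℤ, k ≠ 0 → ∫ x, Complex.exp (Complex.I * k * x) * h x ∂mπ = 0) :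
    ∃ c : ℂ, h =ᵐ[mπ] fun _ => c := by
  refine ⟨(∫ x, h x ∂mπ) / (2 * Real.pi), ?_⟩
  set c := (∫ x, h x ∂mπ) / (2 * Real.pi) with hc
  have hexp : ∀ k : ℤ, Continuous fun x : ℝ => Complex.exp (Complex.I * k * x) := by
    intro k; fun_prop
  have hb : ∀ (k : ℤ) (x : ℝ), ‖Complex.exp (Complex.I * k * x)‖ ≤ 1 := by
    intro k x; simp [Complex.norm_exp]
  have := fourier_uniqueness (fun x => h x - c) (hi.sub (integrable_const c)) (by
    intro k
    simp only [mul_sub]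
    rw [integral_sub (hi.bdd_mul (hexp k).aestronglyMeasurable (Eventually.of_forall (hb k)))
      ((integrable_const c).bdd_mul (hexp k).aestronglyMeasurable (Eventually.of_forall (hb k))),
      integral_mul_const]
    rcases eq_or_ne k 0 with rfl | hk
    · have : (Real.pi : ℂ) ≠ 0 := by exact_mod_cast Real.pi_ne_zero
      simp [mpi_univ, hc]
      field_simp
      ring
    · rw [h0 k hk, integral_exp_ne k hk]; simp)
  filter_upwards [this] with x hx
  exact sub_eq_zero.1 hx

lemma norm_expI (k : ℤ) (x : ℝ) : ‖Complex.exp (Complex.I * k * x)‖ = 1 := by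
  simp [Complex.norm_exp]

lemma conj_expI (k : ℤ) (x : ℝ) : (starRingEnd ℂ) (Complex.exp (Complex.I * k * x))
    = Complex.exp (Complex.I * (-k : ℤ) * x) := by
  rw [← Complex.exp_conj]
  congr 1
  simp

lemma memLp_exp_mul (k : ℤ) (f : Hsp) :
    MemLp (fun x : ℝ => Complex.exp (Complex.I * k * x) * f x) 2 mπ := by
  have hc : Continuous fun x : ℝ => Complex.exp (Complex.I * k * x) := by fun_prop
  refine (Lp.memLp f).of_le (hc.aestronglyMeasurable.mul (Lp.aestronglyMeasurable f))
    (Eventually.of_forall fun x => ?_)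
  rw [norm_mul, norm_expI, one_mul]

/-- Multiplication by `e^{ikx}`. -/
def shiftE (k : ℤ) : Hsp →ₗᵢ[ℂ] Hsp where
  toFun f := (memLp_exp_mul k f).toLp _
  map_add' f g := by
    rw [← MemLp.toLp_add, MemLp.toLp_eq_toLp_iff]
    filter_upwards [Lp.coeFn_add f g] with x hx
    rw [hx]; simp [mul_add]
  map_smul' c f := by
    rw [RingHom.id_apply, ← MemLp.toLp_const_smul, MemLp.toLp_eq_toLp_iff]
    filter_upwards [Lp.coeFn_smul c f] with x hx
    rw [hx]; simp [mul_left_comm]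
  norm_map' f := by
    change ‖(memLp_exp_mul k f).toLp _‖ = ‖f‖
    rw [Lp.norm_toLp, Lp.norm_def]
    congr 1
    apply eLpNorm_congr_norm_ae
    refine Eventually.of_forall fun x => ?_
    rw [norm_mul, norm_expI, one_mul]

lemma shiftE_coe (k : ℤ) (f : Hsp) :
    ⇑(shiftE k f) =ᵐ[mπ] fun x => Complex.exp (Complex.I * k * x) * f x :=
  (memLp_exp_mul k f).coeFn_toLp

lemma shiftE_e (e : ℤ → Hsp)
    (he : ∀ k : ℤ, ⇑(e k) =ᵐ[mπ] fun x => Complex.exp (Complex.I * k * x)) (k j : ℤ) :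
    shiftE k (e j) = e (k + j) := by
  apply Lp.ext
  filter_upwards [shiftE_coe k (e j), he j, he (k + j)] with x h1 h2 h3
  rw [h1, h2, h3, ← Complex.exp_add]
  congr 1; push_cast; ring

lemma shiftE_inner (k : ℤ) (f g : Hsp) :
    inner ℂ (shiftE k f) g = inner ℂ f (shiftE (-k) g) := by
  rw [L2.inner_def, L2.inner_def]
  apply integral_congr_ae
  filter_upwards [shiftE_coe k f, shiftE_coe (-k) g] with x h1 h2
  rw [h1, h2, RCLike.inner_apply, RCLike.inner_apply, map_mul, conj_expI]
  ring

lemma shiftE_neg (k : ℤ) (f : Hsp) : shiftE k (shiftE (-k) f) = f := by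
  apply Lp.ext
  filter_upwards [shiftE_coe k (shiftE (-k) f), shiftE_coe (-k) f] with x h1 h2
  rw [h1, h2, ← mul_assoc, ← Complex.exp_add]
  simp

section Mul

variable (E : Set ℝ) (M : Hsp →L[ℂ] Hsp)
    (hM : ∀ f : Hsp, ⇑(M f) =ᵐ[mπ] fun x => (if x ∈ E then (1 : ℂ) else -1) * f x)

include hM

lemma M_shift (k : ℤ) (f : Hsp) : shiftE k (M f) = M (shiftE k f) := by
  apply Lp.ext
  filter_upwards [shiftE_coe k (M f), hM f, hM (shiftE k f), shiftE_coe k f] with x h1 h2 h3 h4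
  rw [h1, h2, h3, h4]; ring

lemma M_invol (f : Hsp) : M (M f) = f := by
  apply Lp.ext
  filter_upwards [hM f, hM (M f)] with x h1 h2
  rw [h2, h1]; split_ifs <;> simp

lemma M_symm (f g : Hsp) : inner ℂ (M f) g = inner ℂ f (M g) := by
  rw [L2.inner_def, L2.inner_def]
  apply integral_congr_ae
  filter_upwards [hM f, hM g] with x h1 h2
  rw [h1, h2, RCLike.inner_apply, RCLike.inner_apply]
  split_ifs <;> simp

lemma core_contradiction (hEm : MeasurableSet E)
    (hEsub : E ⊆ Set.Ioc (-Real.pi) Real.pi)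
    (hEpos : 0 < volume E) (hEcpos : 0 < volume (Set.Ioc (-Real.pi) Real.pi \ E))
    (e : ℤ → Hsp)
    (he : ∀ k : ℤ, ⇑(e k) =ᵐ[mπ] fun x => Complex.exp (Complex.I * k * x))
    (l : ℝ) (hl1 : -1 < l) (hl2 : l < 1) (f : Hsp)
    (hf : f ∈ (Submodule.span ℂ (e '' {k : ℤ | 0 ≤ k})).topologicalClosure)
    (hs : ∀ a ∈ (Submodule.span ℂ (e '' {k : ℤ | 0 ≤ k})).topologicalClosure,
      inner ℂ a (M f - (l : ℂ) • f) = inner ℂ a (e 0)) : False := by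
  set A := (Submodule.span ℂ (e '' {k : ℤ | 0 ≤ k})).topologicalClosure with hA
  have heA : ∀ k : ℤ, 0 ≤ k → e k ∈ A := fun k hk =>
    Submodule.le_topologicalClosure _ (Submodule.subset_span ⟨k, hk, rfl⟩)
  set u := M f - (l : ℂ) • f with hu
  have hinner : ∀ k : ℤ, inner ℂ (e k) (e 0) = ∫ x, Complex.exp (Complex.I * (-k : ℤ) * x) ∂mπ := by
    intro k
    rw [L2.inner_def]
    apply integral_congr_ae
    filter_upwards [he k, he 0] with x h1 h2
    rw [h1, h2, RCLike.inner_apply, conj_expI]; simp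
  have hzero : ∀ k : ℤ, 0 < k → inner ℂ (shiftE k f) u = 0 := by
    intro k hk
    rw [shiftE_inner]
    have hle : A ≤ (Submodule.span ℂ {shiftE (-k) u})ᗮ := by
      apply Submodule.topologicalClosure_minimal
      · rw [Submodule.span_le]
        rintro _ ⟨j, hj, rfl⟩
        have hj' : 0 ≤ j := hj
        rw [SetLike.mem_coe, Submodule.mem_orthogonal_singleton_iff_inner_left, ← shiftE_inner,
          shiftE_e e he, hs _ (heA _ (by omega)), hinner, integral_exp_ne _ (by omega)]
      · exact Submodule.isClosed_orthogonal _
    exact Submodule.mem_orthogonal_singleton_iff_inner_left.1 (hle hf)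
  let m : ℝ → ℝ := fun x => if x ∈ E then 1 else -1
  let h : ℝ → ℝ := fun x => (m x - l) * ‖f x‖ ^ 2
  have huc : ⇑u =ᵐ[mπ] fun x => ((m x - l : ℝ) : ℂ) * f x := by
    filter_upwards [hM f, Lp.coeFn_sub (M f) ((l : ℂ) • f), Lp.coeFn_smul (l : ℂ) f]
      with x h1 h2 h3
    rw [hu, h2, Pi.sub_apply, h3, h1, Pi.smul_apply]
    simp only [m]
    split_ifs <;> simp <;> ring
  have hcc : ∀ x, f x * (starRingEnd ℂ) (f x) = (‖f x‖ ^ 2 : ℝ) := by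
    intro x
    rw [Complex.mul_conj, Complex.normSq_eq_norm_sq]
  have hint : Integrable (fun x => (h x : ℂ)) mπ := by
    refine (L2.integrable_inner (𝕜 := ℂ) f u).congr ?_
    filter_upwards [huc] with x h1
    rw [h1, RCLike.inner_apply, mul_assoc, hcc]
    simp only [h]; push_cast; rfl
  have hneg : ∀ k : ℤ, 0 < k →
      ∫ x, Complex.exp (Complex.I * (-k : ℤ) * x) * (h x : ℂ) ∂mπ = 0 := by
    intro k hk
    rw [← hzero k hk, L2.inner_def]
    apply integral_congr_ae
    filter_upwards [huc, shiftE_coe k f] with x h1 h2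
    rw [h1, h2, RCLike.inner_apply, map_mul, conj_expI]
    have := hcc x
    simp only [h]
    push_cast at this ⊢
    linear_combination (-(m x - l : ℂ) * Complex.exp (Complex.I * (-k) * x)) * this
  obtain ⟨c, hc⟩ := fourier_const (fun x => (h x : ℂ)) hint (by
    intro k hk
    rcases lt_or_gt_of_ne hk with hk | hk
    · have := hneg (-k) (by omega)
      rwa [neg_neg] at this
    · have h1 := congrArg (starRingEnd ℂ) (hneg k hk)
      rw [← integral_conj, map_zero] at h1
      rw [← h1]
      congr 1
      ext x
      rw [map_mul, conj_expI, neg_neg, Complex.conj_ofReal])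
  have hfreqE : ∃ᵐ x ∂mπ, x ∈ E := by
    rw [frequently_ae_mem_iff, mπ, Measure.restrict_apply hEm, Set.inter_eq_left.2 hEsub]
    exact hEpos.ne'
  have hfreqC : ∃ᵐ x ∂mπ, x ∉ E := by
    have := frequently_ae_mem_iff (μ := mπ) (s := Eᶜ)
    refine this.2 ?_
    rw [mπ, Measure.restrict_apply hEm.compl, Set.inter_comm]
    exact hEcpos.ne'
  have hc0 : 0 ≤ c.re := by
    obtain ⟨x, hx, hx2⟩ := (hfreqE.and_eventually hc).exists
    rw [show c = (h x : ℂ) from hx2.symm, Complex.ofReal_re]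
    simp only [h, m, if_pos hx]
    have := sq_nonneg ‖f x‖
    nlinarith
  have hc1 : c.re ≤ 0 := by
    obtain ⟨x, hx, hx2⟩ := (hfreqC.and_eventually hc).exists
    rw [show c = (h x : ℂ) from hx2.symm, Complex.ofReal_re]
    simp only [h, m, if_neg hx]
    have := sq_nonneg ‖f x‖
    nlinarith
  have hf0 : f = 0 := by
    rw [Lp.eq_zero_iff_ae_eq_zero]
    filter_upwards [hc] with x hx
    have h1 : h x = 0 := by
      rw [show h x = c.re by rw [← hx, Complex.ofReal_re]]
      exact le_antisymm hc1 hc0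
    have h2 : m x - l ≠ 0 := by
      simp only [m]
      split_ifs
      · linarith
      · intro h; linarith
    simpa [h, h2] using h1
  have h1 := hs (e 0) (heA 0 le_rfl)
  rw [hu, hf0, map_zero, smul_zero, sub_zero, inner_zero_right, hinner] at h1
  simp [mpi_univ] at h1

lemma no_gap (hEm : MeasurableSet E)
    (hEsub : E ⊆ Set.Ioc (-Real.pi) Real.pi)
    (hEpos : 0 < volume E) (hEcpos : 0 < volume (Set.Ioc (-Real.pi) Real.pi \ E))
    (e : ℤ → Hsp)
    (he : ∀ k : ℤ, ⇑(e k) =ᵐ[mπ] fun x => Complex.exp (Complex.I * k * x))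
    (P : ℕ → Hsp →L[ℂ] Hsp)
    (hPs : ∀ n x y, inner ℂ (P n x) y = inner ℂ x (P n y))
    (hPi : ∀ n, IsIdempotentElem (P n))
    (hPr : ∀ n, LinearMap.range (P n : Hsp →ₗ[ℂ] Hsp) =
      Submodule.span ℂ (e '' {k : ℤ | |k| ≤ (n : ℤ)}))
    (l : ℝ) (hl1 : -1 < l) (hl2 : l < 1) (ε : ℝ) (hε : 0 < ε)
    (hfr : ∃ᶠ n in atTop, ∀ g ∈ LinearMap.range (P n : Hsp →ₗ[ℂ] Hsp),
      ε * ‖g‖ ≤ ‖P n (M g) - (l : ℂ) • g‖) : False := by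
  set S := Submodule.span ℂ (e '' {k : ℤ | 0 ≤ k}) with hS
  let A := S.topologicalClosure
  let B : Hsp →L[ℂ] Hsp := M - (l : ℂ) • ContinuousLinearMap.id ℂ Hsp
  have hBa : ∀ g, B g = M g - (l : ℂ) • g := fun g => rfl
  have : CompleteSpace A := (Submodule.isClosed_topologicalClosure S).completeSpace_coe
  have hBs : ∀ x y, inner ℂ (B x) y = inner ℂ x (B y) := by
    intro x y
    rw [hBa, hBa, inner_sub_left, inner_sub_right, M_symm E M hM, inner_smul_left,
      inner_smul_right, Complex.conj_ofReal]
  have hmono : ∀ g ∈ S, ∃ N : ℕ, ∀ n ≥ N, shiftE (-n) g ∈ LinearMap.range (P n : Hsp →ₗ[ℂ] Hsp) := by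
    intro g hg
    induction hg using Submodule.span_induction with
    | mem x hx =>
      obtain ⟨k, hk, rfl⟩ := hx
      have hk' : 0 ≤ k := hk
      refine ⟨k.toNat, fun n hn => ?_⟩
      rw [shiftE_e e he, hPr]
      refine Submodule.subset_span ⟨_, ?_, rfl⟩
      simp only [Set.mem_setOf_eq, abs_le]
      omega
    | zero => exact ⟨0, fun n _ => by rw [map_zero]; exact zero_mem _⟩
    | add x y _ _ hx hy =>
      obtain ⟨N1, h1⟩ := hx
      obtain ⟨N2, h2⟩ := hy
      refine ⟨max N1 N2, fun n hn => ?_⟩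
      rw [map_add]
      exact add_mem (h1 n (le_trans (le_max_left _ _) hn)) (h2 n (le_trans (le_max_right _ _) hn))
    | smul c x _ hx =>
      obtain ⟨N1, h1⟩ := hx
      refine ⟨N1, fun n hn => ?_⟩
      rw [map_smul]
      exact Submodule.smul_mem _ _ (h1 n hn)
  have hback : ∀ (n : ℕ), ∀ k ∈ LinearMap.range (P n : Hsp →ₗ[ℂ] Hsp), shiftE n k ∈ S := by
    intro n k hk
    rw [hPr] at hk
    have : Submodule.span ℂ (e '' {k : ℤ | |k| ≤ (n : ℤ)})
        ≤ S.comap (shiftE n).toLinearMap := by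
      rw [Submodule.span_le]
      rintro _ ⟨j, hj, rfl⟩
      change shiftE n (e j) ∈ S
      rw [shiftE_e e he]
      refine Submodule.subset_span ⟨_, ?_, rfl⟩
      simp only [Set.mem_setOf_eq, abs_le] at hj ⊢
      omega
    exact this hk
  have hbS : ∀ g ∈ S, ε * ‖g‖ ≤ ‖A.orthogonalProjectionOnto (B g)‖ := by
    intro g hg
    obtain ⟨N, hN⟩ := hmono g hg
    obtain ⟨n, hn, hnN⟩ := (hfr.and_eventually (eventually_ge_atTop N)).exists
    have hr := hN n hnN
    have h1 := hn _ hr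
    rw [LinearIsometry.norm_map] at h1
    set g' := shiftE (-n) g with hg'
    set k := P n (B g') with hk
    have hk1 : P n (M g') - (l : ℂ) • g' = k := by
      rw [hk, hBa, map_sub, map_smul, proj_fix (P n) (hPi n) hr]
    rw [hk1] at h1
    have hkr : k ∈ LinearMap.range (P n : Hsp →ₗ[ℂ] Hsp) := ⟨B g', rfl⟩
    have hkA : shiftE n k ∈ A := Submodule.le_topologicalClosure _ (hback n k hkr)
    have h2 : inner ℂ (shiftE n k) (B g) = inner ℂ k k := by
      rw [shiftE_inner]
      have : shiftE (-n) (B g) = B g' := by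
        rw [hBa, hBa, map_sub, map_smul, M_shift E M hM]
      rw [this]
      conv_lhs => rw [← proj_fix (P n) (hPi n) hkr]
      rw [hPs]
    have h3 := Submodule.inner_orthogonalProjectionOnto_eq_of_mem_left (⟨_, hkA⟩ : A) (B g)
    have h4 : ‖k‖ * ‖k‖ ≤ ‖k‖ * ‖A.orthogonalProjectionOnto (B g)‖ := by
      have h5 := norm_inner_le_norm (𝕜 := ℂ) (⟨_, hkA⟩ : A) (A.orthogonalProjectionOnto (B g))
      rw [h3] at h5
      change ‖inner ℂ (shiftE n k) (B g)‖ ≤ ‖shiftE n k‖ * _ at h5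
      rw [h2, LinearIsometry.norm_map, inner_self_eq_norm_sq_to_K] at h5
      refine le_trans (le_of_eq ?_) h5
      simp [pow_two]
    rcases (norm_nonneg k).eq_or_lt with h0 | h0
    · rw [← h0] at h1
      exact h1.trans (norm_nonneg _)
    · exact h1.trans (le_of_mul_le_mul_left h4 h0)
  have hbA : ∀ g ∈ A, ε * ‖g‖ ≤ ‖A.orthogonalProjectionOnto (B g)‖ := by
    intro g hg
    have hcl : IsClosed {g : Hsp | ε * ‖g‖ ≤ ‖A.orthogonalProjectionOnto (B g)‖} :=
      isClosed_le (by fun_prop) (by fun_prop)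
    exact closure_minimal (s := (S : Set Hsp)) hbS hcl hg
  have h0A : e 0 ∈ A := Submodule.le_topologicalClosure _ (Submodule.subset_span ⟨0, (le_rfl : (0 : ℤ) ≤ 0), rfl⟩)
  obtain ⟨f, hf, hs⟩ := exists_solution A B hBs ε hε hbA ⟨e 0, h0A⟩
  exact core_contradiction E M hM hEm hEsub hEpos hEcpos e he l hl1 hl2 f hf hs

end Mul

lemma eig_le_one {H : Type*} [NormedAddCommGroup H] [InnerProductSpace ℂ H] [CompleteSpace H]
    (M : H →ₗ[ℂ] H) (hMM : ∀ x, M (M x) = x)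
    (hMs : ∀ x y, inner ℂ (M x) y = inner ℂ x (M y)) (P : H →L[ℂ] H)
    (hPs : ∀ x y, inner ℂ (P x) y = inner ℂ x (P y)) (hPi : IsIdempotentElem P)
    {μ : ℝ} {v : H} (hv : v ∈ LinearMap.range (P : H →ₗ[ℂ] H)) (hv0 : v ≠ 0)
    (he : P (M v) = (μ : ℂ) • v) : μ ^ 2 ≤ 1 := by
  have h1 : inner ℂ v (M v) = (μ : ℂ) * inner ℂ v v := by
    rw [← inner_smul_right, ← he, ← hPs, proj_fix P hPi hv]
  have h2 : |μ| * ‖v‖ ^ 2 ≤ 1 * ‖v‖ ^ 2 := by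
    have h3 := norm_inner_le_norm (𝕜 := ℂ) v (M v)
    rw [h1, norm_mul, norm_invol M hMM hMs, inner_self_eq_norm_sq_to_K] at h3
    simp at h3
    nlinarith
  have hpos : 0 < ‖v‖ ^ 2 := by positivity
  rw [sq_le_one_iff_abs_le_one]
  exact le_of_mul_le_mul_right h2 hpos

/-- The point on the unit circle above (or below) `t`. -/
def circ (σ t : ℝ) : ℂ := ⟨t, σ * √(1 - t ^ 2)⟩

lemma circ_norm (σ t : ℝ) (hσ : σ ^ 2 = 1) (ht : t ^ 2 ≤ 1) : ‖circ σ t‖ = 1 := by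
  have h : √(1 - t ^ 2) ^ 2 = 1 - t ^ 2 := Real.sq_sqrt (by linarith)
  rw [Complex.norm_def, Complex.normSq_apply, circ]
  rw [show t * t + σ * √(1 - t ^ 2) * (σ * √(1 - t ^ 2)) = 1 by
    linear_combination σ ^ 2 * h + (1 - t ^ 2) * hσ]
  exact Real.sqrt_one

lemma circ_continuous (σ : ℝ) : Continuous (circ σ) := by
  have : circ σ = fun t : ℝ => (t : ℂ) + ((σ * √(1 - t ^ 2) : ℝ) : ℂ) * Complex.I := by
    ext t; exact Complex.mk_eq_add_mul_I _ _
  rw [this]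
  fun_prop

lemma exists_circ (z : ℂ) (hz : ‖z‖ = 1) : ∃ σ : ℝ, σ ^ 2 = 1 ∧ circ σ z.re = z := by
  have h : z.re ^ 2 + z.im ^ 2 = 1 := by
    have := Complex.sq_norm z
    rw [hz, Complex.normSq_apply] at this
    linarith
  have h2 : √(1 - z.re ^ 2) = |z.im| := by
    rw [show 1 - z.re ^ 2 = z.im ^ 2 by linarith, Real.sqrt_sq_eq_abs]
  rcases le_total 0 z.im with h0 | h0
  · refine ⟨1, by norm_num, Complex.ext rfl ?_⟩
    simp only [circ]
    rw [h2, abs_of_nonneg h0, one_mul]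
  · refine ⟨-1, by norm_num, Complex.ext rfl ?_⟩
    simp only [circ]
    rw [h2, abs_of_nonpos h0]; ring

/-- For the multiplication operator `M` by the symbol `m = 1 on E, -1 on Eᶜ`, where
`E ⊊ (-π, π]` is a finite union of semi-open intervals (with `E` and `Eᶜ` of positive
measure), and for the subspaces `L_n = span{e^{-inx}, …, e^{inx}}`, the uniform limiting
set `Λ(M)` of the second order spectra is the whole unit circle. -/
theorem limiting_set_of_multiplication_operator_eq_unit_circle
    (E : Set ℝ) (s : Finset (ℝ × ℝ)) (hE : E = ⋃ p ∈ s, Set.Ioc p.1 p.2)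
    (hEsub : E ⊆ Set.Ioc (-Real.pi) Real.pi)
    (hEpos : 0 < volume E)
    (hEcpos : 0 < volume (Set.Ioc (-Real.pi) Real.pi \ E))
    -- `M` is multiplication by the symbol `m`:
    (M : Hsp →L[ℂ] Hsp)
    (hM : ∀ f : Hsp, ⇑(M f) =ᵐ[mπ] fun x => (if x ∈ E then (1 : ℂ) else -1) * f x)
    -- `e k` is the exponential `e^{ikx}` and `P n` the orthogonal projection onto `L_n`:
    (e : ℤ → Hsp)
    (he : ∀ k : ℤ, ⇑(e k) =ᵐ[mπ] fun x => Complex.exp (Complex.I * k * x))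
    (P : ℕ → Hsp →L[ℂ] Hsp)
    (hPsa : ∀ n, IsSelfAdjoint (P n))
    (hPidem : ∀ n, IsIdempotentElem (P n))
    (hPrange : ∀ n, LinearMap.range (P n : Hsp →ₗ[ℂ] Hsp) =
      Submodule.span ℂ (e '' {k : ℤ | |k| ≤ (n : ℤ)})) :
    {z : ℂ | ∃ zs : ℕ → ℂ, (∀ n, zs n ∈ spec2 (M : Hsp →ₗ[ℂ] Hsp) (P n)) ∧
      Tendsto zs atTop (𝓝 z)} = {z : ℂ | ‖z‖ = 1} := by
  have hEm : MeasurableSet E := by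
    rw [hE]
    exact Finset.measurableSet_biUnion _ fun p _ => measurableSet_Ioc
  have hPs : ∀ n x y, inner ℂ (P n x) y = inner ℂ x (P n y) := fun n x y =>
    (hPsa n).isSymmetric x y
  have hMs := M_symm E M hM
  have hMM := M_invol E M hM
  have hfd : ∀ n, FiniteDimensional ℂ (LinearMap.range (P n : Hsp →ₗ[ℂ] Hsp)) := by
    intro n
    rw [hPrange]
    have hfin : {k : ℤ | |k| ≤ (n : ℤ)}.Finite :=
      (Set.finite_Icc (-(n : ℤ)) n).subset fun k hk => abs_le.1 hk
    exact FiniteDimensional.span_of_finite ℂ (hfin.image e)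
  have hnorm : ∀ n, ∀ w ∈ spec2 (M : Hsp →ₗ[ℂ] Hsp) (P n), ‖w‖ = 1 := by
    intro n w hw
    have := hfd n
    exact spec2_norm_eq_one (M : Hsp →ₗ[ℂ] Hsp) hMM hMs (P n) (hPs n) (hPidem n) hw
  ext z
  simp only [Set.mem_setOf_eq]
  constructor
  · rintro ⟨zs, h1, h2⟩
    have h3 := h2.norm
    simp only [fun n => hnorm n _ (h1 n)] at h3
    exact tendsto_nhds_unique h3 tendsto_const_nhds
  intro hz
  obtain ⟨σ, hσ, hσz⟩ := exists_circ z hz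
  have hmem : ∀ n (μ : ℝ) (v : Hsp), v ∈ LinearMap.range (P n : Hsp →ₗ[ℂ] Hsp) → v ≠ 0 →
      P n (M v) = (μ : ℂ) • v → circ σ μ ∈ spec2 (M : Hsp →ₗ[ℂ] Hsp) (P n) := by
    intro n μ v hv hv0 hvm
    have hle := eig_le_one (M : Hsp →ₗ[ℂ] Hsp) hMM hMs (P n) (hPs n) (hPidem n) hv hv0 hvm
    exact mem_spec2_of_eig (M : Hsp →ₗ[ℂ] Hsp) hMM (P n) (hPidem n) (circ_norm σ μ hσ hle)
      hv hv0 hvm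
  have hne : ∀ n, (spec2 (M : Hsp →ₗ[ℂ] Hsp) (P n)).Nonempty := by
    intro n
    by_contra hempty
    rw [Set.not_nonempty_iff_eq_empty] at hempty
    have := hfd n
    have hr0 : e 0 ∈ LinearMap.range (P n : Hsp →ₗ[ℂ] Hsp) := by
      rw [hPrange]
      exact Submodule.subset_span ⟨0, by simp, rfl⟩
    have he0 : 0 < ‖e 0‖ := by
      rw [norm_pos_iff]
      intro h0
      have h1 : inner ℂ (e 0) (e 0) = ((2 * Real.pi : ℝ) : ℂ) := by
        rw [L2.inner_def, ← mpi_univ]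
        have : ∫ x, inner ℂ (e 0 x) (e 0 x) ∂mπ = ∫ x, (1 : ℂ) ∂mπ := by
          apply integral_congr_ae
          filter_upwards [he 0] with x hx
          rw [hx]; simp
        rw [this]; simp
      rw [h0, inner_zero_right] at h1
      have h2 : (0 : ℝ) = 2 * Real.pi := by exact_mod_cast h1
      linarith [Real.pi_pos]
    have hb := bounded_below_of_eig (M : Hsp →ₗ[ℂ] Hsp) hMs (P n) (hPs n) (hPidem n) 0
      (‖P n (M (e 0))‖ / ‖e 0‖ + 1) (by positivity) (by
        intro μ v hv hv0 hvm
        have := hmem n μ v hv hv0 hvm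
        rw [hempty] at this
        exact this.elim) (e 0) hr0
    simp only [Complex.ofReal_zero, zero_smul, sub_zero, add_mul, one_mul,
      div_mul_cancel₀ _ he0.ne', ContinuousLinearMap.coe_coe] at hb
    linarith
  have hclose : ∀ δ > 0, ∀ᶠ n in atTop, ∃ w ∈ spec2 (M : Hsp →ₗ[ℂ] Hsp) (P n), dist z w < δ := by
    intro δ hδ
    obtain ⟨η, hη, hηδ⟩ := Metric.continuous_iff.1 (circ_continuous σ) z.re δ hδ
    by_contra hcon
    rw [not_eventually] at hcon
    have hre : |z.re| ≤ 1 := hz ▸ Complex.abs_re_le_norm z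
    have hs0 : 0 < min (η / 4) (1 / 2) := by positivity
    set s' := min (η / 4) (1 / 2) with hs'
    have hs1 : s' ≤ η / 4 := min_le_left _ _
    have hs2 : s' ≤ 1 / 2 := min_le_right _ _
    set l := z.re * (1 - s') with hl
    have hlabs : |l| < 1 := by
      rw [hl, abs_mul, abs_of_pos (by linarith : 0 < 1 - s')]
      nlinarith [abs_nonneg z.re]
    have hlz : |l - z.re| ≤ η / 4 := by
      rw [hl, show z.re * (1 - s') - z.re = -(z.re * s') by ring, abs_neg, abs_mul, abs_of_pos hs0]
      nlinarith [abs_nonneg z.re]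
    refine no_gap E M hM hEm hEsub hEpos hEcpos e he P hPs hPidem hPrange l
      (abs_lt.1 hlabs).1 (abs_lt.1 hlabs).2 (η / 2) (by linarith) (hcon.mono ?_)
    intro n hn
    have := hfd n
    refine bounded_below_of_eig (M : Hsp →ₗ[ℂ] Hsp) hMs (P n) (hPs n) (hPidem n) l (η / 2)
      (by linarith) ?_
    intro μ v hv hv0 hvm
    by_contra hlt
    push Not at hlt
    refine hn ⟨_, hmem n μ v hv hv0 hvm, ?_⟩
    have h1 := hηδ μ (by
      rw [Real.dist_eq]
      calc |μ - z.re| ≤ |μ - l| + |l - z.re| := abs_sub_le _ _ _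
        _ < η := by linarith)
    rwa [hσz, dist_comm] at h1
  have hch : ∀ n : ℕ, ∃ w ∈ spec2 (M : Hsp →ₗ[ℂ] Hsp) (P n),
      dist z w < Metric.infDist z (spec2 (M : Hsp →ₗ[ℂ] Hsp) (P n)) + 1 / ((n : ℝ) + 1) := by
    intro n
    rw [← Metric.infDist_lt_iff (hne n)]
    have : 0 < 1 / ((n : ℝ) + 1) := by positivity
    linarith
  choose zs hzs hzd using hch
  refine ⟨zs, hzs, ?_⟩
  rw [Metric.tendsto_nhds]
  intro δ hδ
  filter_upwards [hclose (δ / 2) (by linarith),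
    (tendsto_one_div_add_atTop_nhds_zero_nat (𝕜 := ℝ)).eventually_lt_const
      (show (0 : ℝ) < δ / 2 by linarith)] with n hn hn2
  rw [dist_comm]
  have := (Metric.infDist_lt_iff (hne n)).2 hn
  linarith [hzd n]

end
end

section
/- Let E ⊊ (−π, π] be a finite union of semi-open intervals with both E and E^c of positive measure, m(x) = 1 on E and −1 on E^c, M multiplication by m on L²(−π, π), and M_n the compression of M to L_n := span{e^{ikx} : |k| ≤ n}. Then every point μ ∈ (−1, 1) of the spectral gap is a point of spectral pollution: there exists a sequence μ_n ∈ Spec M_n with μ_n → μ, even though Spec M = {−1, 1}. -/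
open Filter Topology MeasureTheory

attribute [local instance] Classical.propDecidable

noncomputable section

/-- the exponential -/
def ex (k : ℤ) (x : ℝ) : ℂ := Complex.exp (Complex.I * k * x)

lemma ex_cont (k : ℤ) : Continuous (ex k) := by unfold ex; fun_prop

lemma ex_norm (k : ℤ) (x : ℝ) : ‖ex k x‖ = 1 := by
  have : Complex.I * k * x = ((k * x : ℝ) : ℂ) * Complex.I := by push_cast; ring
  rw [ex, this, Complex.norm_exp_ofReal_mul_I]

lemma ex_mul (k j : ℤ) (x : ℝ) : ex k x * ex j x = ex (j + k) x := by
  rw [ex, ex, ex, ← Complex.exp_add]; congr 1; push_cast; ring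

lemma ex_conj (k : ℤ) (x : ℝ) : (starRingEnd ℂ) (ex k x) = ex (-k) x := by
  rw [ex, ex, ← Complex.exp_conj]; congr 1; simp

lemma memLp_S (k : ℤ) (f : Hsp) : MemLp (fun x => ex k x * f x) 2 mπ := by
  have h := Lp.memLp f
  refine h.of_le ((ex_cont k).aestronglyMeasurable.mul h.1) ?_
  filter_upwards with x
  simp [ex_norm]

/-- multiplication by the exponential -/
def S (k : ℤ) (f : Hsp) : Hsp := (memLp_S k f).toLp _

lemma S_coe (k : ℤ) (f : Hsp) : ⇑(S k f) =ᵐ[mπ] fun x => ex k x * f x := MemLp.coeFn_toLp _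

lemma norm_S (k : ℤ) (f : Hsp) : ‖S k f‖ = ‖f‖ := by
  rw [Lp.norm_def, Lp.norm_def]
  congr 1
  apply eLpNorm_congr_norm_ae
  filter_upwards [S_coe k f] with x hx
  simp [hx, ex_norm]

lemma inner_eq (f g : Hsp) : inner ℂ f g = ∫ x, g x * (starRingEnd ℂ) (f x) ∂mπ := by
  rw [L2.inner_def]; rfl

lemma inner_S (k : ℤ) (f g : Hsp) : inner ℂ (S k f) g = inner ℂ f (S (-k) g) := by
  rw [inner_eq, inner_eq]
  apply integral_congr_ae
  filter_upwards [S_coe k f, S_coe (-k) g] with x h1 h2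
  rw [h1, h2, map_mul, ex_conj]; ring

lemma S_e (e : ℤ → Hsp) (he : ∀ k : ℤ, ⇑(e k) =ᵐ[mπ] ex k) (k j : ℤ) :
    S k (e j) = e (j + k) := by
  apply Lp.ext
  filter_upwards [S_coe k (e j), he j, he (j + k)] with x h1 h2 h3
  rw [h1, h2, h3, ex_mul]

lemma integral_ex (k : ℤ) (hk : k ≠ 0) : ∫ x, ex k x ∂mπ = 0 := by
  have hpi : -Real.pi ≤ Real.pi := by linarith [Real.pi_pos]
  have hc : Complex.I * k ≠ 0 := by simp [hk]
  rw [mπ, ← intervalIntegral.integral_of_le hpi]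
  unfold ex
  rw [integral_exp_mul_complex hc]
  have : Complex.exp (Complex.I * k * (Real.pi : ℝ)) = Complex.exp (Complex.I * k * ((-Real.pi : ℝ) : ℂ)) := by
    rw [Complex.exp_eq_exp_iff_exists_int]
    exact ⟨k, by push_cast; ring⟩
  rw [this]; simp

lemma inner_e (e : ℤ → Hsp) (he : ∀ k : ℤ, ⇑(e k) =ᵐ[mπ] ex k) (j k : ℤ) :
    inner ℂ (e j) (e k) = ∫ x, ex (k - j) x ∂mπ := by
  rw [inner_eq]
  apply integral_congr_ae
  filter_upwards [he j, he k] with x h1 h2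
  rw [h1, h2, ex_conj, ex_mul]; congr 1; ring

lemma inner_e_self (e : ℤ → Hsp) (he : ∀ k : ℤ, ⇑(e k) =ᵐ[mπ] ex k) (j : ℤ) :
    inner ℂ (e j) (e j) = 2 * Real.pi := by
  rw [inner_e e he]
  simp [ex, mπ]
  have := Real.pi_pos
  rw [max_eq_left (by positivity)]; push_cast; ring

lemma mπ_Ioo : mπ = volume.restrict (Set.Ioo (-Real.pi) Real.pi) :=
  (restrict_Ioo_eq_restrict_Ioc).symm

/-- uniqueness of Fourier coefficients in L¹ -/
lemma fourier_unique (F : ℝ → ℂ) (hF : Integrable F mπ)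
    (h : ∀ k : ℤ, ∫ x, F x * ex k x ∂mπ = 0) : F =ᵐ[mπ] 0 := by
  have hpi := Real.pi_pos
  have : Fact (0 < 2 * Real.pi) := ⟨by positivity⟩
  have hint : ∀ ψ : C(AddCircle (2 * Real.pi), ℂ),
      Integrable (fun x : ℝ => F x * ψ (x : AddCircle (2 * Real.pi))) mπ := by
    intro ψ
    refine hF.mul_bdd (c := ‖ψ‖) ?_ ?_
    · exact (ψ.continuous.comp (AddCircle.continuous_mk' _)).aestronglyMeasurable
    · filter_upwards with x using ψ.norm_coe_le_norm _
  let Λ : C(AddCircle (2 * Real.pi), ℂ) →ₗ[ℂ] ℂ :=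
    { toFun := fun ψ => ∫ x : ℝ, F x * ψ (x : AddCircle (2 * Real.pi)) ∂mπ
      map_add' := by
        intro a b
        rw [← integral_add (hint a) (hint b)]
        simp [mul_add]
      map_smul' := by
        intro c a
        simp only [RingHom.id_apply, smul_eq_mul]
        rw [← integral_const_mul]
        congr 1; ext x; simp; ring }
  let Λc : C(AddCircle (2 * Real.pi), ℂ) →L[ℂ] ℂ := Λ.mkContinuous (∫ x, ‖F x‖ ∂mπ) (by
    intro ψ
    refine (norm_integral_le_integral_norm _).trans ?_
    rw [← integral_mul_const]
    refine integral_mono_of_nonneg (ae_of_all _ fun x => norm_nonneg _) (hF.norm.mul_const _) ?_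
    filter_upwards with x
    simp only [norm_mul]
    gcongr
    exact ψ.norm_coe_le_norm _)
  have hker : ∀ ψ, Λc ψ = 0 := by
    have h1 : Submodule.span ℂ (Set.range (@fourier (2 * Real.pi))) ≤ Λc.toLinearMap.ker := by
      rw [Submodule.span_le]
      rintro _ ⟨k, rfl⟩
      rw [SetLike.mem_coe, LinearMap.mem_ker]
      change ∫ x : ℝ, F x * fourier k (x : AddCircle (2 * Real.pi)) ∂mπ = 0
      rw [← h k]
      congr 1; ext x
      rw [fourier_coe_apply, ex]
      congr 2
      have : (Real.pi : ℂ) ≠ 0 := by exact_mod_cast hpi.ne'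
      push_cast
      field_simp
    have h2 := Submodule.topologicalClosure_minimal _ h1 Λc.isClosed_ker
    rw [span_fourier_closure_eq_top] at h2
    intro ψ
    exact h2 (Submodule.mem_top (x := ψ))
  rw [mπ_Ioo] at hF ⊢
  have key := isOpen_Ioo.ae_eq_zero_of_integral_contDiff_smul_eq_zero (μ := volume)
    (U := Set.Ioo (-Real.pi) Real.pi) (f := F) ?_ ?_
  · rw [Filter.EventuallyEq, ae_restrict_iff' measurableSet_Ioo]
    exact key
  · exact IntegrableOn.locallyIntegrableOn hF
  · intro w hw hwc hws
    have hz : ∀ x, x ∉ Set.Ioo (-Real.pi) Real.pi → w x = 0 := by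
      intro x hx
      by_contra hne
      exact hx (hws (subset_tsupport _ hne))
    let W : ℝ → ℂ := fun x => (w x : ℂ)
    have hWc : Continuous (AddCircle.liftIco (2 * Real.pi) (-Real.pi) W) := by
      apply AddCircle.liftIco_continuous
      · simp only [W]
        rw [hz (-Real.pi) (by simp), hz (-Real.pi + 2 * Real.pi) (by simp; intro; linarith)]
      · exact (Complex.continuous_ofReal.comp hw.continuous).continuousOn
    have := hker ⟨_, hWc⟩
    change ∫ x : ℝ, F x * AddCircle.liftIco (2 * Real.pi) (-Real.pi) W (x : AddCircle (2 * Real.pi)) ∂mπ = 0 at this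
    rw [mπ_Ioo] at this
    rw [← this, ← setIntegral_eq_integral_of_forall_compl_eq_zero (s := Set.Ioo (-Real.pi) Real.pi)]
    · apply setIntegral_congr_fun measurableSet_Ioo
      intro x hx
      simp only
      rw [AddCircle.liftIco_coe_apply ⟨hx.1.le, by linarith [hx.2]⟩]
      simp [W, mul_comm]
    · intro x hx
      simp [hz x hx]

lemma weak_limit (U : Ultrafilter ℕ) (g : ℕ → Hsp) (C : ℝ) (hg : ∀ n, ‖g n‖ ≤ C) :
    ∃ G : Hsp, ∀ x, Tendsto (fun n => inner ℂ (g n) x) U (𝓝 (inner ℂ G x)) := by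
  let d : ℕ → WeakDual ℂ Hsp := fun n => StrongDual.toWeakDual (InnerProductSpace.toDual ℂ Hsp (g n))
  have hK := WeakDual.isCompact_closedBall (𝕜 := ℂ) (E := Hsp) 0 C
  have hmem : ∀ n, d n ∈ WeakDual.toStrongDual ⁻¹' Metric.closedBall (0 : StrongDual ℂ Hsp) C := by
    intro n
    simp only [Set.mem_preimage, mem_closedBall_zero_iff]
    change ‖InnerProductSpace.toDual ℂ Hsp (g n)‖ ≤ C
    simpa using hg n
  obtain ⟨l, -, hl⟩ := hK.ultrafilter_le_nhds (U.map d) (by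
    rw [le_principal_iff]; exact Filter.mem_map.2 (Filter.univ_mem' hmem))
  refine ⟨(InnerProductSpace.toDual ℂ Hsp).symm (WeakDual.toStrongDual l), fun x => ?_⟩
  rw [InnerProductSpace.toDual_symm_apply]
  have h1 : Tendsto d U (𝓝 l) := hl
  exact ((WeakDual.eval_continuous x).tendsto l).comp h1

lemma solve {V : Type*} [NormedAddCommGroup V] [InnerProductSpace ℂ V] [FiniteDimensional ℂ V]
    (A : V →ₗ[ℂ] V) (hA : A.IsSymmetric) (μ : ℝ) (ε : ℝ) (hε : 0 < ε)
    (h : ∀ z : ℂ, Module.End.HasEigenvalue A z → ε ≤ ‖z - μ‖) (w : V) :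
    ∃ f : V, A f - (μ : ℂ) • f = w ∧ ‖f‖ ≤ ε⁻¹ * ‖w‖ := by
  let b := hA.eigenvectorBasis rfl
  let ev := hA.eigenvalues rfl
  have hev : ∀ i, ε ≤ ‖(ev i : ℂ) - μ‖ := fun i => h _ (hA.hasEigenvalue_eigenvalues rfl i)
  have hne : ∀ i, (ev i : ℂ) - μ ≠ 0 := fun i h0 => by
    have := hev i; rw [h0, norm_zero] at this; linarith
  have hAb : ∀ i, A (b i) = (ev i : ℂ) • b i := fun i => hA.apply_eigenvectorBasis rfl i
  let f : V := ∑ i, (((ev i : ℂ) - μ)⁻¹ * inner ℂ (b i) w) • b i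
  have hf : ∀ i, inner ℂ (b i) f = ((ev i : ℂ) - μ)⁻¹ * inner ℂ (b i) w := fun i =>
    b.orthonormal.inner_right_fintype _ i
  refine ⟨f, ?_, ?_⟩
  · conv_rhs => rw [← b.sum_repr' w]
    simp only [f, map_sum, map_smul, hAb, Finset.smul_sum, ← Finset.sum_sub_distrib]
    apply Finset.sum_congr rfl
    intro i _
    rw [smul_smul, smul_smul, ← sub_smul]
    congr 1
    have := hne i
    field_simp
  · have h2 : ‖f‖ ^ 2 ≤ (ε⁻¹ * ‖w‖) ^ 2 := by
      rw [mul_pow, ← b.sum_sq_norm_inner_right f, ← b.sum_sq_norm_inner_right w, Finset.mul_sum]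
      apply Finset.sum_le_sum
      intro i _
      rw [hf, norm_mul, mul_pow, norm_inv]
      gcongr
      exact hev i
    exact le_of_sq_le_sq h2 (by positivity)

lemma exists_of_pos {A : Set ℝ} (hA : 0 < mπ A) {p : ℝ → Prop} (hp : ∀ᵐ x ∂mπ, p x) :
    ∃ x ∈ A, p x := by
  obtain ⟨x, h1, h2⟩ := ((frequently_ae_mem_iff.2 hA.ne').and_eventually hp).exists
  exact ⟨x, h1, h2⟩

lemma rigidity (A B : Set ℝ) (hA : 0 < mπ A) (hB : 0 < mπ B) (r : ℝ → ℝ)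
    (hrA : ∀ x ∈ A, 0 < r x) (hrB : ∀ x ∈ B, r x < 0) (hr0 : ∀ x, r x ≠ 0)
    (G h : Hsp) (hh : ⇑h =ᵐ[mπ] fun x => (r x : ℂ) * G x)
    (H : ∀ k : ℤ, 1 ≤ k → inner ℂ G (S (-k) h) = 0) : G = 0 := by
  have hpi := Real.pi_pos
  let F : ℝ → ℂ := fun x => h x * (starRingEnd ℂ) (G x)
  have hFi : Integrable F mπ := L2.integrable_inner (𝕜 := ℂ) G h
  have hFr : ∀ᵐ x ∂mπ, F x = ((r x * ‖G x‖ ^ 2 : ℝ) : ℂ) := by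
    filter_upwards [hh] with x hx
    simp only [F]
    rw [hx, mul_assoc, Complex.mul_conj, Complex.normSq_eq_norm_sq]
    push_cast; rfl
  have hneg : ∀ k : ℤ, 1 ≤ k → ∫ x, F x * ex (-k) x ∂mπ = 0 := by
    intro k hk
    rw [← H k hk, inner_eq]
    apply integral_congr_ae
    filter_upwards [S_coe (-k) h] with x hx
    rw [hx]; simp only [F]; ring
  have hpos : ∀ k : ℤ, 1 ≤ k → ∫ x, F x * ex k x ∂mπ = 0 := by
    intro k hk
    have h1 := congrArg (starRingEnd ℂ) (hneg k hk)
    rw [← integral_conj, map_zero] at h1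
    rw [← h1]
    apply integral_congr_ae
    filter_upwards [hFr] with x hx
    rw [map_mul, ex_conj, hx, Complex.conj_ofReal, neg_neg]
  have hall : ∀ k : ℤ, k ≠ 0 → ∫ x, F x * ex k x ∂mπ = 0 := by
    intro k hk
    rcases lt_or_gt_of_ne hk with h1 | h1
    · have := hneg (-k) (by lia)
      rwa [neg_neg] at this
    · exact hpos k (by lia)
  have hvol : mπ.real Set.univ = 2 * Real.pi := by
    simp [mπ]
    rw [max_eq_left (by positivity)]; ring
  let c : ℂ := (∫ x, F x ∂mπ) / (2 * Real.pi)
  have hFc : (fun x => F x - c) =ᵐ[mπ] 0 := by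
    apply fourier_unique _ (hFi.sub (integrable_const c))
    intro k
    have hexi : Integrable (ex k) mπ :=
      (integrable_const (1 : ℝ)).mono' (ex_cont k).aestronglyMeasurable
        (by filter_upwards with x using (ex_norm k x).le)
    have hFe : Integrable (fun x => F x * ex k x) mπ :=
      hFi.mul_bdd (c := 1) (ex_cont k).aestronglyMeasurable
        (by filter_upwards with x using (ex_norm k x).le)
    change ∫ x, (F x - c) * ex k x ∂mπ = 0
    simp only [sub_mul]
    rw [integral_sub hFe (hexi.const_mul c), integral_const_mul]
    by_cases hk : k = 0
    · subst hk
      have : ∀ x, ex 0 x = 1 := by intro x; simp [ex]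
      simp only [this, mul_one, integral_const, hvol, c]
      have : (Real.pi : ℂ) ≠ 0 := by exact_mod_cast hpi.ne'
      simp
    · rw [hall k hk, integral_ex k hk]; simp
  have hc : ∀ᵐ x ∂mπ, r x * ‖G x‖ ^ 2 = c.re := by
    filter_upwards [hFr, hFc] with x h1 h2
    have h3 : F x = c := sub_eq_zero.1 h2
    rw [← h3, h1, Complex.ofReal_re]
  obtain ⟨x, hxA, hx⟩ := exists_of_pos hA hc
  obtain ⟨y, hyB, hy⟩ := exists_of_pos hB hc
  have hc0 : c.re = 0 := by
    have h1 : 0 ≤ c.re := by rw [← hx]; have := hrA x hxA; positivity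
    have h2 : c.re ≤ 0 := by
      rw [← hy]; exact mul_nonpos_of_nonpos_of_nonneg (hrB y hyB).le (by positivity)
    linarith
  apply Lp.ext
  filter_upwards [hc, Lp.coeFn_zero ℂ 2 mπ] with x h1 h2
  rw [h2]
  rw [hc0, mul_eq_zero] at h1
  simpa [hr0 x] using h1

lemma symm_of_real (r : ℝ → ℝ) (N : Hsp →L[ℂ] Hsp)
    (hN : ∀ f : Hsp, ⇑(N f) =ᵐ[mπ] fun x => (r x : ℂ) * f x) (f g : Hsp) :
    inner ℂ (N f) g = inner ℂ f (N g) := by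
  rw [inner_eq, inner_eq]
  apply integral_congr_ae
  filter_upwards [hN f, hN g] with x h1 h2
  rw [h1, h2, map_mul, Complex.conj_ofReal]; ring

lemma N_S (r : ℝ → ℝ) (N : Hsp →L[ℂ] Hsp)
    (hN : ∀ f : Hsp, ⇑(N f) =ᵐ[mπ] fun x => (r x : ℂ) * f x) (k : ℤ) (f : Hsp) :
    N (S k f) = S k (N f) := by
  apply Lp.ext
  filter_upwards [hN f, hN (S k f), S_coe k f, S_coe k (N f)] with x h1 h2 h3 h4
  rw [h2, h3, h4, h1]; ring

lemma spec (E : Set ℝ) (hEm : MeasurableSet E)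
    (hA : 0 < mπ E) (hB : 0 < mπ Eᶜ)
    (M : Hsp →L[ℂ] Hsp)
    (hM : ∀ f : Hsp, ⇑(M f) =ᵐ[mπ] fun x => (if x ∈ E then (1 : ℂ) else -1) * f x) :
    spectrum ℂ M = {(-1 : ℂ), 1} := by
  have hMM : M * M = 1 := by
    ext1 f
    apply Lp.ext
    filter_upwards [hM f, hM (M f)] with x h1 h2
    change (M (M f)) x = f x
    rw [h2, h1]
    split_ifs <;> simp
  have hev : ∀ (A : Set ℝ) (z : ℂ), MeasurableSet A → 0 < mπ A →
      (∀ x ∈ A, (if x ∈ E then (1 : ℂ) else -1) = z) → z ∈ spectrum ℂ M := by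
    intro A z hAm hA0 hz
    rw [spectrum.mem_iff]
    intro hu
    let v : Hsp := indicatorConstLp 2 hAm (measure_ne_top mπ A) (1 : ℂ)
    have hv : ⇑v =ᵐ[mπ] A.indicator fun _ => (1 : ℂ) := indicatorConstLp_coeFn
    have h1 : M v = z • v := by
      apply Lp.ext
      filter_upwards [hM v, hv, Lp.coeFn_smul z v] with x h1 h2 h3
      rw [h1, h3, Pi.smul_apply, h2, smul_eq_mul]
      by_cases hx : x ∈ A
      · rw [hz x hx]
      · simp [hx]
    have h0 : (algebraMap ℂ (Hsp →L[ℂ] Hsp) z - M) v = 0 := by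
      rw [sub_apply, h1, Algebra.algebraMap_eq_smul_one]
      simp
    have hv0 : v = 0 := by
      obtain ⟨u, hu⟩ := hu
      have : ((↑u⁻¹ : Hsp →L[ℂ] Hsp) * (↑u : Hsp →L[ℂ] Hsp)) v = 0 := by
        rw [hu]; change (↑u⁻¹ : Hsp →L[ℂ] Hsp) ((algebraMap ℂ (Hsp →L[ℂ] Hsp) z - M) v) = 0
        rw [h0, map_zero]
      rw [Units.inv_mul] at this
      exact this
    rw [hv0] at hv
    obtain ⟨x, hx, h2⟩ := exists_of_pos hA0 (hv.symm.trans (Lp.coeFn_zero ℂ 2 mπ))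
    simp [hx] at h2
  apply Set.Subset.antisymm
  · intro z hz
    by_contra hne
    simp only [Set.mem_insert_iff, Set.mem_singleton_iff, not_or] at hne
    apply hz
    have hz2 : z ^ 2 - 1 ≠ 0 := by
      have : z ^ 2 - 1 = (z - 1) * (z + 1) := by ring
      rw [this]
      exact mul_ne_zero (sub_ne_zero.2 hne.2) (fun h => hne.1 (eq_neg_of_add_eq_zero_left h))
    have hcomm : Commute (algebraMap ℂ (Hsp →L[ℂ] Hsp) z - M) (algebraMap ℂ (Hsp →L[ℂ] Hsp) z + M) := by
      have h1 := Algebra.commutes z M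
      apply Commute.sub_left <;> apply Commute.add_right
      · exact Commute.refl _
      · exact h1
      · exact h1.symm
      · exact Commute.refl _
    have hprod : (algebraMap ℂ (Hsp →L[ℂ] Hsp) z - M) * (algebraMap ℂ (Hsp →L[ℂ] Hsp) z + M)
        = algebraMap ℂ _ (z ^ 2 - 1) := by
      rw [sub_mul, mul_add, mul_add, hMM, Algebra.commutes z M, map_sub, map_pow, map_one, sq]
      abel
    have hu : IsUnit ((algebraMap ℂ (Hsp →L[ℂ] Hsp) z - M) * (algebraMap ℂ (Hsp →L[ℂ] Hsp) z + M)) := by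
      rw [hprod]
      exact (IsUnit.mk0 _ hz2).map (algebraMap ℂ (Hsp →L[ℂ] Hsp))
    exact (hcomm.isUnit_mul_iff.1 hu).1
  · rintro z (rfl | rfl)
    · exact hev Eᶜ _ hEm.compl hB (fun x hx => if_neg hx)
    · exact hev E _ hEm hA (fun x hx => if_pos hx)

/-- The compression of `M` to the range of `P`. -/
def comp (P M : Hsp →L[ℂ] Hsp) :
    LinearMap.range (P : Hsp →ₗ[ℂ] Hsp) →ₗ[ℂ] LinearMap.range (P : Hsp →ₗ[ℂ] Hsp) :=
  ((P : Hsp →ₗ[ℂ] Hsp).rangeRestrict).comp ((M : Hsp →ₗ[ℂ] Hsp).comp (Submodule.subtype _))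

lemma comp_coe (P M : Hsp →L[ℂ] Hsp) (v : LinearMap.range (P : Hsp →ₗ[ℂ] Hsp)) :
    (comp P M v : Hsp) = P (M v) := rfl

lemma proj_id (P : Hsp →L[ℂ] Hsp) (hP : IsIdempotentElem P) (v : Hsp)
    (hv : v ∈ LinearMap.range (P : Hsp →ₗ[ℂ] Hsp)) : P v = v := by
  obtain ⟨w, rfl⟩ := hv
  exact congrArg (fun T : Hsp →L[ℂ] Hsp => T w) hP

lemma proj_symm (P : Hsp →L[ℂ] Hsp) (hP : IsSelfAdjoint P) (v w : Hsp) :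
    inner ℂ (P v) w = inner ℂ v (P w) :=
  (ContinuousLinearMap.isSelfAdjoint_iff_isSymmetric.1 hP) v w

lemma evals (E : Set ℝ) (hA : 0 < mπ E) (hB : 0 < mπ Eᶜ)
    (M : Hsp →L[ℂ] Hsp)
    (hM : ∀ f : Hsp, ⇑(M f) =ᵐ[mπ] fun x => (if x ∈ E then (1 : ℂ) else -1) * f x)
    (e : ℤ → Hsp) (he : ∀ k : ℤ, ⇑(e k) =ᵐ[mπ] ex k)
    (P : ℕ → Hsp →L[ℂ] Hsp)
    (hPsa : ∀ n, IsSelfAdjoint (P n))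
    (hPidem : ∀ n, IsIdempotentElem (P n))
    (hPrange : ∀ n, LinearMap.range (P n : Hsp →ₗ[ℂ] Hsp) =
      Submodule.span ℂ (e '' {k : ℤ | |k| ≤ (n : ℤ)}))
    (hfin : ∀ n, FiniteDimensional ℂ (LinearMap.range (P n : Hsp →ₗ[ℂ] Hsp)))
    (μ : ℝ) (hμ : μ ∈ Set.Ioo (-1 : ℝ) 1) (ε : ℝ) (hε : 0 < ε) :
    ∀ᶠ n in atTop, ∃ z : ℂ, Module.End.HasEigenvalue (comp (P n) M) z ∧ ‖z - μ‖ < ε := by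
  by_contra hcon
  rw [Filter.not_eventually] at hcon
  let bad : Set ℕ := {n | ¬ ∃ z : ℂ, Module.End.HasEigenvalue (comp (P n) M) z ∧ ‖z - μ‖ < ε}
  have hne : (atTop ⊓ 𝓟 bad).NeBot := Filter.frequently_mem_iff_neBot.1 hcon
  let U : Ultrafilter ℕ := Ultrafilter.of (atTop ⊓ 𝓟 bad)
  have hU : (U : Filter ℕ) ≤ atTop ⊓ 𝓟 bad := Ultrafilter.of_le _
  have hUtop : (U : Filter ℕ) ≤ atTop := hU.trans inf_le_left
  have hUbad : ∀ᶠ n in (U : Filter ℕ), n ∈ bad := hU.trans inf_le_right (mem_principal_self bad)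
  let r : ℝ → ℝ := fun x => (if x ∈ E then 1 else -1) - μ
  let N : Hsp →L[ℂ] Hsp := M - (μ : ℂ) • ContinuousLinearMap.id ℂ Hsp
  have hNdef : ∀ f, N f = M f - (μ : ℂ) • f := fun f => rfl
  have hN : ∀ f : Hsp, ⇑(N f) =ᵐ[mπ] fun x => (r x : ℂ) * f x := by
    intro f
    rw [hNdef]
    filter_upwards [hM f, Lp.coeFn_sub (M f) ((μ : ℂ) • f), Lp.coeFn_smul (μ : ℂ) f] with x h1 h2 h3
    rw [h2, Pi.sub_apply, h1, h3, Pi.smul_apply, smul_eq_mul]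
    simp only [r]
    split_ifs <;> push_cast <;> ring
  have hMs : ∀ f g : Hsp, inner ℂ (M f) g = inner ℂ f (M g) := by
    apply symm_of_real (fun x => if x ∈ E then 1 else -1) M
    intro f
    filter_upwards [hM f] with x h1
    rw [h1]
    split_ifs <;> simp
  have hmem : ∀ (n : ℕ) (k : ℤ), |k| ≤ n → e k ∈ LinearMap.range (P n : Hsp →ₗ[ℂ] Hsp) := by
    intro n k hk
    rw [hPrange]
    exact Submodule.subset_span ⟨k, hk, rfl⟩
  have hnorm : ∀ k : ℤ, ‖e k‖ = ‖e 0‖ := by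
    intro k
    rw [← norm_S k (e 0), S_e e he, zero_add]
  have hsol : ∀ n : ℕ, ∃ f : Hsp, ‖f‖ ≤ ε⁻¹ * ‖e 0‖ ∧ (n ∈ bad →
      f ∈ LinearMap.range (P n : Hsp →ₗ[ℂ] Hsp) ∧ P n (N f) = e (-n)) := by
    intro n
    by_cases hn : n ∈ bad
    · have hsym : (comp (P n) M).IsSymmetric := by
        intro u v
        change inner ℂ (comp (P n) M u : Hsp) (v : Hsp) = inner ℂ (u : Hsp) (comp (P n) M v : Hsp)
        rw [comp_coe, comp_coe, proj_symm _ (hPsa n), proj_id _ (hPidem n) v v.2, hMs,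
          ← proj_symm _ (hPsa n), proj_id _ (hPidem n) u u.2]
      have := hfin n
      obtain ⟨f, hf1, hf2⟩ := solve (comp (P n) M) hsym μ ε hε (by
        intro z hz
        by_contra hlt
        exact hn ⟨z, hz, not_le.1 hlt⟩) ⟨e (-n), hmem n (-n) (by simp)⟩
      refine ⟨f, ?_, fun _ => ⟨f.2, ?_⟩⟩
      · rw [← hnorm (-n)]; exact hf2
      · have := congrArg (Subtype.val) hf1
        rw [hNdef, map_sub, map_smul, proj_id _ (hPidem n) f f.2]
        exact this
    · exact ⟨0, by rw [norm_zero]; positivity, fun h => absurd h hn⟩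
  choose f hfn hf using hsol
  obtain ⟨G, hG⟩ := weak_limit U (fun n => S n (f n)) (ε⁻¹ * ‖e 0‖) (fun n => by
    rw [norm_S]; exact hfn n)
  -- the equation satisfied by `G`
  have hlim : ∀ j : ℤ, 0 ≤ j → inner ℂ G (N (e j)) = inner ℂ (e 0) (e j) := by
    intro j hj
    refine tendsto_nhds_unique (hG (N (e j))) ?_
    refine Tendsto.congr' ?_ tendsto_const_nhds
    have hjn : ∀ᶠ n : ℕ in (U : Filter ℕ), j.toNat ≤ n := hUtop (eventually_ge_atTop _)
    filter_upwards [hUbad, hjn] with n hn hj2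
    obtain ⟨h1, h2⟩ := hf n hn
    rw [← symm_of_real r N hN, N_S r N hN, inner_S, S_e e he,
      ← proj_id (P n) (hPidem n) (e (j + -n)) (hmem n _ (by rw [abs_le]; constructor <;> lia)),
      ← proj_symm _ (hPsa n), h2, inner_e e he, inner_e e he]
    congr 2
    ext x
    congr 1
    ring
  have horth : ∀ j : ℤ, 1 ≤ j → inner ℂ (e j) (N G) = 0 := by
    intro j hj
    rw [← inner_conj_symm, symm_of_real r N hN, hlim j (by lia), inner_e e he,
      integral_ex _ (by lia), map_zero]
  have hG0 : G = 0 := by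
    refine rigidity E Eᶜ hA hB r ?_ ?_ ?_ G (N G) (hN G) ?_
    · intro x hx; simp only [r, if_pos hx]; linarith [hμ.2]
    · intro x hx; simp only [r, if_neg hx]; linarith [hμ.1]
    · intro x; simp only [r]; have := hμ.1; have := hμ.2
      split_ifs
      · linarith
      · linarith
    · intro k hk
      refine tendsto_nhds_unique (hG (S (-k) (N G))) ?_
      refine Tendsto.congr' ?_ tendsto_const_nhds
      filter_upwards [hUbad] with n hn
      have h1 := (hf n hn).1
      rw [hPrange] at h1
      rw [inner_S]
      symm
      generalize f n = y at h1 ⊢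
      induction h1 using Submodule.span_induction with
      | mem x hx =>
        obtain ⟨i, hi, rfl⟩ := hx
        have hi2 := abs_le.1 (show |i| ≤ (n : ℤ) by simpa using hi)
        rw [← inner_S, S_e e he, ← inner_S, S_e e he]
        exact horth _ (by lia)
      | zero => rw [inner_zero_left]
      | add x y _ _ hx hy => rw [inner_add_left, hx, hy, add_zero]
      | smul a x _ hx => rw [inner_smul_left, hx, mul_zero]
  have h0 := hlim 0 le_rfl
  rw [hG0, inner_zero_left, inner_e_self e he] at h0
  have := Real.pi_pos
  have h2 : (2 * Real.pi : ℂ) ≠ 0 := by exact_mod_cast (by positivity : (2 * Real.pi : ℝ) ≠ 0)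
  exact h2 h0.symm

/-- For the multiplication operator `M` by the symbol `m = 1 on E, -1 on Eᶜ` and the
truncations `M_n = P_n M|_{L_n}` to `L_n = span{e^{-inx}, …, e^{inx}}`, every point
`μ ∈ (-1, 1)` of the spectral gap is a point of spectral pollution:  there are
`μ_n ∈ Spec M_n` with `μ_n → μ`, even though `Spec M = {-1, 1}`. -/
theorem every_gap_point_pollutes_for_multiplication_operator
    (E : Set ℝ) (s : Finset (ℝ × ℝ)) (hE : E = ⋃ p ∈ s, Set.Ioc p.1 p.2)
    (hEsub : E ⊆ Set.Ioc (-Real.pi) Real.pi)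
    (hEpos : 0 < volume E)
    (hEcpos : 0 < volume (Set.Ioc (-Real.pi) Real.pi \ E))
    -- `M` is multiplication by the symbol `m`:
    (M : Hsp →L[ℂ] Hsp)
    (hM : ∀ f : Hsp, ⇑(M f) =ᵐ[mπ] fun x => (if x ∈ E then (1 : ℂ) else -1) * f x)
    -- `e k` is the exponential `e^{ikx}` and `P n` the orthogonal projection onto `L_n`:
    (e : ℤ → Hsp)
    (he : ∀ k : ℤ, ⇑(e k) =ᵐ[mπ] fun x => Complex.exp (Complex.I * k * x))
    (P : ℕ → Hsp →L[ℂ] Hsp)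
    (hPsa : ∀ n, IsSelfAdjoint (P n))
    (hPidem : ∀ n, IsIdempotentElem (P n))
    (hPrange : ∀ n, LinearMap.range (P n : Hsp →ₗ[ℂ] Hsp) =
      Submodule.span ℂ (e '' {k : ℤ | |k| ≤ (n : ℤ)})) :
    spectrum ℂ M = {(-1 : ℂ), 1} ∧
    ∀ μ₀ : ℝ, μ₀ ∈ Set.Ioo (-1 : ℝ) 1 →
      ∃ ms : ℕ → ℂ,
        (∀ n, ∃ v, v ∈ LinearMap.range (P n : Hsp →ₗ[ℂ] Hsp) ∧ v ≠ 0 ∧ P n (M v) = ms n • v) ∧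
        Tendsto ms atTop (𝓝 (μ₀ : ℂ)) := by
  have hEm : MeasurableSet E := by
    rw [hE]
    exact Finset.measurableSet_biUnion _ fun p _ => measurableSet_Ioc
  have hA : 0 < mπ E := by
    rw [mπ, Measure.restrict_apply hEm, Set.inter_eq_left.2 hEsub]
    exact hEpos
  have hB : 0 < mπ Eᶜ := by
    rw [mπ, Measure.restrict_apply hEm.compl, Set.inter_comm, ← Set.sdiff_eq]
    exact hEcpos
  refine ⟨spec E hEm hA hB M hM, fun μ₀ hμ => ?_⟩
  have he' : ∀ k : ℤ, ⇑(e k) =ᵐ[mπ] ex k := he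
  have hfin : ∀ n, FiniteDimensional ℂ (LinearMap.range (P n : Hsp →ₗ[ℂ] Hsp)) := by
    intro n
    rw [hPrange]
    apply FiniteDimensional.span_of_finite
    apply Set.Finite.image
    have : {k : ℤ | |k| ≤ (n : ℤ)} = Set.Icc (-(n : ℤ)) n := by
      ext k; simp [abs_le]
    rw [this]
    exact Set.finite_Icc _ _
  have hnt : ∀ n, Nontrivial (LinearMap.range (P n : Hsp →ₗ[ℂ] Hsp)) := by
    intro n
    have h0 : e 0 ∈ LinearMap.range (P n : Hsp →ₗ[ℂ] Hsp) := by
      rw [hPrange]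
      exact Submodule.subset_span ⟨0, by simp, rfl⟩
    refine ⟨⟨⟨e 0, h0⟩, 0, fun h => ?_⟩⟩
    have h1 : e 0 = 0 := congrArg Subtype.val h
    have h2 := inner_e_self e he' 0
    rw [h1, inner_zero_left] at h2
    have h3 : (2 * Real.pi : ℂ) ≠ 0 := by
      have := Real.pi_pos
      exact_mod_cast (by positivity : (2 * Real.pi : ℝ) ≠ 0)
    exact h3 h2.symm
  have hmin : ∀ n, ∃ z : ℂ, Module.End.HasEigenvalue (comp (P n) M) z ∧
      ∀ w : ℂ, Module.End.HasEigenvalue (comp (P n) M) w → ‖z - μ₀‖ ≤ ‖w - μ₀‖ := by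
    intro n
    have := hfin n
    have := hnt n
    have hf : {z : ℂ | Module.End.HasEigenvalue (comp (P n) M) z}.Finite := by
      refine (Module.End.finite_spectrum (comp (P n) M)).subset fun z hz => hz.mem_spectrum
    obtain ⟨z, hz⟩ := Module.End.exists_eigenvalue (comp (P n) M)
    obtain ⟨w, hw, hw2⟩ := Set.exists_min_image _ (fun z : ℂ => ‖z - μ₀‖) hf ⟨z, hz⟩
    exact ⟨w, hw, hw2⟩
  choose ms hms hmsmin using hmin
  refine ⟨ms, fun n => ?_, ?_⟩
  · obtain ⟨v, hv⟩ := (hms n).exists_hasEigenvector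
    refine ⟨v, v.2, fun h => hv.2 (Subtype.ext h), ?_⟩
    exact congrArg Subtype.val hv.apply_eq_smul
  · rw [Metric.tendsto_nhds]
    intro ε hε
    filter_upwards [evals E hA hB M hM e he' P hPsa hPidem hPrange hfin μ₀ hμ ε hε] with n hn
    obtain ⟨z, hz, hz2⟩ := hn
    rw [dist_eq_norm]
    exact (hmsmin n z hz).trans_lt hz2

end
end
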